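/- Let M ∈ GL₃(ℤ) (a 3×3 integer matrix with determinant ±1) have a real eigenvalue α with α ≠ 1 and α ≠ -1, and a nonreal complex eigenvalue β, and let Γ be the centralizer of M in GL₃(ℤ). Then the cyclic subgroup M^ℤ = {M^k : k ∈ ℤ} generated by M has finite index in Γ; equivalently, since Γ is abelian, the quotient group Γ/M^ℤ is finite. -/

import Mathlib

/-!
Let `P` be a matrix of eigenvectors of `M`. Conjugation by `P` diagonalizes every `N` commuting
with `M`, so each eigenvalue `D i` of `M` gives a character `N ↦ χ N i` of the centralizer, sending
`N` to its eigenvalue on the `D i`-eigenline of `M`. Integer matrices with bounded eigenvalues and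
common eigenvectors form a finite set. If every eigenvalue of `M` is, up to complex conjugation,
one of two eigenvalues `D i`, `D j`, then `|det N| = 1` forces `‖χ N j‖ ≤ 1` as soon as
`1 ≤ ‖χ N i‖`; so only finitely many `N` satisfy `1 ≤ ‖χ N i‖ ≤ C`. Since `‖χ M i‖ = ‖D i‖ ≠ 1`,
multiplying `N` by a power of `M` brings `‖χ N i‖` into such a range with `C` independent of `N`.
-/

open Matrix Function
open scoped ComplexConjugate

theorem exists_semiconjBy_diagonal {n K : Type*} [Fintype n] [DecidableEq n] [Field K]
    {A : Matrix n n K} {D : n → K} (hD : Injective D)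
    (hroot : ∀ i, A.charpoly.IsRoot (D i)) :
    ∃ P : GL n K, SemiconjBy (P : Matrix n n K) (diagonal D) A := by
  have heigen (i : n) : ∃ v, Module.End.HasEigenvector A.toLin' (D i) v := by
    refine Module.End.HasEigenvalue.exists_hasEigenvector ?_
    rw [Module.End.hasEigenvalue_iff_isRoot_charpoly, charpoly_toLin']
    exact hroot i
  choose v hv using heigen
  have hindep : LinearIndependent K v := Module.End.eigenvectors_linearIndependent' _ D hD v hv
  obtain ⟨P, hP⟩ : IsUnit (of v)ᵀ := linearIndependent_cols_iff_isUnit.mp hindep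
  refine ⟨P, ?_⟩
  rw [hP]
  ext k i
  rw [mul_diagonal, mul_comm]
  exact (congrFun (hv i).apply_eq_smul k).symm

section Diagonalization

variable {n R : Type*} [Fintype n] [DecidableEq n] [CommRing R]
  {A B : Matrix n n R} {D : n → R} {P : GL n R}

theorem diag_conj_eq_of_semiconjBy_diagonal {d : n → R}
    (hB : SemiconjBy (P : Matrix n n R) (diagonal d) B) :
    ((↑P⁻¹ : Matrix n n R) * B * P).diag = d := by
  rw [mul_assoc, ← hB.eq]
  simp [← mul_assoc]

theorem mulVec_col_of_semiconjBy_diagonal {d : n → R}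
    (hB : SemiconjBy (P : Matrix n n R) (diagonal d) B) (i : n) :
    B *ᵥ P.val.col i = d i • P.val.col i := by
  rw [← mulVec_single_one, mulVec_mulVec, ← hB.eq, ← mulVec_mulVec, diagonal_mulVec_single,
    mul_one, ← mulVec_smul, ← Pi.single_smul, smul_eq_mul, mul_one]

variable [IsDomain R]

theorem diagonal_diag_of_commute_diagonal (hD : Injective D) (hB : Commute (diagonal D) B) :
    diagonal B.diag = B := by
  ext i j
  rcases eq_or_ne i j with rfl | hij
  · simp
  · have hentry : D i * B i j = D j * B i j := by
      simpa only [diagonal_mul, mul_diagonal, mul_comm] using congrFun₂ hB.eq i j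
    rw [diagonal_apply_ne _ hij]
    by_contra hne
    exact hij (hD (mul_right_cancel₀ (Ne.symm hne) hentry))

theorem semiconjBy_diagonal_diag_conj (hD : Injective D)
    (hA : SemiconjBy (P : Matrix n n R) (diagonal D) A) (hAB : Commute A B) :
    SemiconjBy (P : Matrix n n R)
      (diagonal ((↑P⁻¹ : Matrix n n R) * B * P).diag) B := by
  have hB : SemiconjBy (P : Matrix n n R) ((↑P⁻¹ : Matrix n n R) * B * P) B := by
    simp [SemiconjBy, ← mul_assoc]
  have hcomm : Commute (diagonal D) ((↑P⁻¹ : Matrix n n R) * B * P) :=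
    ((hA.units_inv_symm_left.mul_left hAB.symm).mul_left hA).symm
  rwa [diagonal_diag_of_commute_diagonal hD hcomm]

theorem mulVec_eq_smul_of_semiconjBy_diagonal (hD : Injective D)
    (hA : SemiconjBy (P : Matrix n n R) (diagonal D) A) {d : n → R}
    (hB : SemiconjBy (P : Matrix n n R) (diagonal d) B) {v : n → R} {i : n}
    (hv : A *ᵥ v = D i • v) : B *ᵥ v = d i • v := by
  obtain ⟨w, rfl⟩ : ∃ w, (P : Matrix n n R) *ᵥ w = v :=
    ⟨(↑P⁻¹ : Matrix n n R) *ᵥ v, by simp⟩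
  have hw (k : n) : D k * w k = D i * w k := by
    rw [mulVec_mulVec, ← hA.eq, ← mulVec_mulVec, ← mulVec_smul] at hv
    simpa [mulVec_diagonal] using
      congrFun (mulVec_injective_of_isUnit P.isUnit hv) k
  rw [mulVec_mulVec, ← hB.eq, ← mulVec_mulVec, ← mulVec_smul]
  congr 1
  ext k
  rw [mulVec_diagonal, Pi.smul_apply, smul_eq_mul]
  rcases eq_or_ne (w k) 0 with hzero | hne
  · simp [hzero]
  · rw [hD (mul_right_cancel₀ hne (hw k))]

end Diagonalization

section EigenvalueHom

variable {G n R : Type*} [Monoid G] [Fintype n] [DecidableEq n] [CommRing R] [IsDomain R]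
  {A : Matrix n n R} {D : n → R} {P : GL n R} {ρ : G →* Matrix n n R}

/-- The eigenvalues of the matrices `ρ g` of a representation commuting with a matrix `A` that has
distinct eigenvalues `D`: the value at `i` is the eigenvalue of `ρ g` on the `D i`-eigenline of `A`,
read off as a diagonal entry in the basis of eigenvectors `P` of `A`. -/
def eigenvalueHom (hD : Injective D) (hA : SemiconjBy (P : Matrix n n R) (diagonal D) A)
    (hρ : ∀ g, Commute A (ρ g)) : G →* (n → R) where
  toFun g := ((↑P⁻¹ : Matrix n n R) * ρ g * P).diag
  map_one' := by simp
  map_mul' g h := diag_conj_eq_of_semiconjBy_diagonal <| by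
    have hmul := (semiconjBy_diagonal_diag_conj hD hA (hρ g)).mul_right
      (semiconjBy_diagonal_diag_conj hD hA (hρ h))
    rwa [diagonal_mul_diagonal, ← map_mul] at hmul

variable (hD : Injective D) (hA : SemiconjBy (P : Matrix n n R) (diagonal D) A)
  (hρ : ∀ g, Commute A (ρ g)) (g : G)

theorem semiconjBy_diagonal_eigenvalueHom :
    SemiconjBy (P : Matrix n n R) (diagonal (eigenvalueHom hD hA hρ g)) (ρ g) :=
  semiconjBy_diagonal_diag_conj hD hA (hρ g)

theorem eigenvalueHom_eq_of_apply_eq {g : G} (hg : ρ g = A) : eigenvalueHom hD hA hρ g = D :=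
  diag_conj_eq_of_semiconjBy_diagonal (hg ▸ hA)

theorem prod_eigenvalueHom : ∏ i, eigenvalueHom hD hA hρ g i = (ρ g).det := by
  have h := congrArg det (semiconjBy_diagonal_eigenvalueHom hD hA hρ g).eq
  rw [det_mul, det_mul, det_diagonal, mul_comm] at h
  exact (P.isUnit.map detMonoidHom).mul_right_cancel h

theorem eigenvalueHom_eq_map_of_eq_map {σ : R →+* R} (hσ : Injective σ)
    (hAσ : A.map σ = A) (hρσ : (ρ g).map σ = ρ g) {i j : n} (hij : D j = σ (D i)) :
    eigenvalueHom hD hA hρ g j = σ (eigenvalueHom hD hA hρ g i) := by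
  let v : n → R := P.val.col i
  have hmap {B : Matrix n n R} {d : n → R} (hB : SemiconjBy P.val (diagonal d) B)
      (hBσ : B.map σ = B) : B *ᵥ (σ ∘ v) = σ (d i) • (σ ∘ v) := by
    ext k
    have h := congrArg σ (congrFun (mulVec_col_of_semiconjBy_diagonal hB i) k)
    rwa [RingHom.map_mulVec, hBσ, Pi.smul_apply, smul_eq_mul, map_mul] at h
  have hv : σ ∘ v ≠ 0 := fun h ↦
    (linearIndependent_cols_of_isUnit P.isUnit).ne_zero i <| by
      ext k
      exact (map_eq_zero_iff σ hσ).mp (congrFun h k)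
  refine smul_left_injective R hv ?_
  change _ • _ = _ • _
  rw [← hmap (semiconjBy_diagonal_eigenvalueHom hD hA hρ g) hρσ]
  refine (mulVec_eq_smul_of_semiconjBy_diagonal hD hA
    (semiconjBy_diagonal_eigenvalueHom hD hA hρ g) ?_).symm
  rw [hij, hmap hA hAσ]

end EigenvalueHom

theorem finite_setOf_semiconjBy_diagonal {n : Type*} [Fintype n] [DecidableEq n] (P : GL n ℂ)
    (C : ℝ) :
    {B : Matrix n n ℤ | ∃ d : n → ℂ, (∀ i, ‖d i‖ ≤ C) ∧
      SemiconjBy (P : Matrix n n ℂ) (diagonal d) (B.map (Int.cast : ℤ → ℂ))}.Finite := by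
  let conjDiagonal (d : n → ℂ) : Matrix n n ℂ := P * diagonal d * (↑P⁻¹ : Matrix n n ℂ)
  have hcompact : IsCompact (conjDiagonal '' Set.univ.pi fun _ ↦ Metric.closedBall 0 C) :=
    (isCompact_univ_pi fun _ ↦ isCompact_closedBall 0 C).image (by fun_prop)
  have hfinite := (Complex.isClosedEmbedding_intCast.matrix_map (m := n) (n := n)
    |>.isCompact_preimage hcompact).finite_of_discrete
  refine hfinite.subset ?_
  rintro B ⟨d, hd, hB⟩
  refine ⟨d, fun i _ ↦ by simpa using hd i, ?_⟩
  simp only [conjDiagonal]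
  rw [hB.eq, mul_assoc, P.mul_inv, mul_one]

theorem finite_quotient_zpowers_of_norm_ne_one {G K : Type*} [Group G] [NormedDivisionRing K]
    (χ : G →* K) {g : G} (hg : ‖χ g‖ ≠ 1)
    (hfin : ∀ C, {x | 1 ≤ ‖χ x‖ ∧ ‖χ x‖ ≤ C}.Finite) : Finite (G ⧸ Subgroup.zpowers g) := by
  have hinv (x : G) : χ x⁻¹ = (χ x)⁻¹ :=
    eq_inv_of_mul_eq_one_left (by rw [← map_mul, inv_mul_cancel, map_one])
  have hpos (x : G) : 0 < ‖χ x‖ := norm_pos_iff.mpr ((Group.isUnit x).map χ).ne_zero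
  wlog hlt : 1 < ‖χ g‖ generalizing g
  · have hginv : 1 < ‖χ g⁻¹‖ := by
      rw [hinv, norm_inv]
      exact (one_lt_inv₀ (hpos g)).mpr (lt_of_le_of_ne (not_lt.mp hlt) hg)
    have hfinite := this hginv.ne' hginv
    rwa [Subgroup.zpowers_inv] at hfinite
  have : Finite {x | 1 ≤ ‖χ x‖ ∧ ‖χ x‖ ≤ ‖χ g‖} := hfin ‖χ g‖
  refine Finite.of_surjective
    (fun x : {x | 1 ≤ ‖χ x‖ ∧ ‖χ x‖ ≤ ‖χ g‖} ↦ (x.1 : G ⧸ Subgroup.zpowers g)) fun q ↦ ?_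
  obtain ⟨x, rfl⟩ := QuotientGroup.mk_surjective q
  obtain ⟨m, hm, hm'⟩ := exists_mem_Ico_zpow (hpos x) hlt
  have hnorm : ‖χ (x * (g ^ m)⁻¹)‖ = ‖χ x‖ / ‖χ g‖ ^ m := by
    rw [map_mul, hinv, map_zpow' χ hinv, ← div_eq_mul_inv, norm_div, norm_zpow]
  have hgm : 0 < ‖χ g‖ ^ m := zpow_pos (hpos g) m
  refine ⟨⟨x * (g ^ m)⁻¹, ?_, ?_⟩, ?_⟩
  · rwa [hnorm, one_le_div hgm]
  · rw [hnorm, div_le_iff₀ hgm, ← zpow_one_add₀ (hpos g).ne', add_comm]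
    exact hm'.le
  · rw [QuotientGroup.eq]
    exact ⟨m, by group⟩

theorem le_one_of_prod_eq_one {ι R : Type*} [Fintype ι] [CommSemiring R] [LinearOrder R]
    [IsStrictOrderedRing R] {x : ι → R} {i j : ι} (hprod : ∏ k, x k = 1)
    (hx : ∀ k, x k = x i ∨ x k = x j) (hi : 1 ≤ x i) : x j ≤ 1 := by
  by_contra! hj
  have hone (k : ι) : 1 ≤ x k := (hx k).elim (fun h ↦ h ▸ hi) fun h ↦ h ▸ hj.le
  have hlt : ∏ _k : ι, (1 : R) < ∏ k, x k :=
    Finset.prod_lt_prod (fun _ _ ↦ one_pos) (fun k _ ↦ hone k) ⟨j, Finset.mem_univ j, hj⟩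
  simp [hprod] at hlt

theorem map_conj_map_intCast {m n : Type*} (B : Matrix m n ℤ) :
    (B.map (Int.cast : ℤ → ℂ)).map (starRingEnd ℂ) = B.map (Int.cast : ℤ → ℂ) := by
  ext
  simp

section Centralizer

variable {n : Type*} [Fintype n] [DecidableEq n]

/-- The inclusion in `Mₙ(ℂ)` of the centralizer of `M` in `GLₙ(ℤ)`. -/
def centralizerToComplexMatrix (M : GL n ℤ) : Subgroup.centralizer {M} →* Matrix n n ℂ :=
  (Int.castRingHom ℂ).mapMatrix.toMonoidHom.comp
    ((Units.coeHom _).comp (Subgroup.subtype _))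

theorem centralizerToComplexMatrix_apply (M : GL n ℤ) (N : Subgroup.centralizer {M}) :
    centralizerToComplexMatrix M N = N.1.val.map (Int.cast : ℤ → ℂ) := rfl

theorem commute_centralizerToComplexMatrix (M : GL n ℤ) (N : Subgroup.centralizer {M}) :
    Commute (M.val.map (Int.cast : ℤ → ℂ)) (centralizerToComplexMatrix M N) := by
  have hcomm : Commute M N.1 := (Subgroup.mem_centralizer_singleton_iff.mp N.2).symm
  exact (hcomm.map (Units.coeHom _)).map (Int.castRingHom ℂ).mapMatrix

theorem norm_det_map_intCast (N : GL n ℤ) : ‖(N.val.map (Int.cast : ℤ → ℂ)).det‖ = 1 := by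
  have hdet : (N.val.map (Int.cast : ℤ → ℂ)).det = (N.val.det : ℂ) :=
    ((Int.castRingHom ℂ).map_det N.val).symm
  have habs : |N.val.det| = 1 := Int.isUnit_iff_abs_eq.mp (N.isUnit.map detMonoidHom)
  rw [hdet, Complex.norm_intCast]
  exact_mod_cast habs

theorem isRoot_charpoly_map_intCast {B : Matrix n n ℤ} {z : ℂ}
    (hz : Polynomial.aeval z B.charpoly = 0) :
    (B.map (Int.cast : ℤ → ℂ)).charpoly.IsRoot z := by
  have hcharpoly : (B.map (Int.cast : ℤ → ℂ)).charpoly = B.charpoly.map (Int.castRingHom ℂ) :=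
    charpoly_map B (Int.castRingHom ℂ)
  rw [Polynomial.IsRoot.def, hcharpoly, Polynomial.eval_map]
  exact hz

theorem centralizer_GL3_quotient_zpowers_finite_general (M : GL n ℤ) {D : n → ℂ}
    (hD : Injective D) (hroot : ∀ k, Polynomial.aeval (D k) M.val.charpoly = 0) {i j : n}
    (hij : ∀ k, D k ∈ ({D i, conj (D i), D j, conj (D j)} : Set ℂ)) (hi : ‖D i‖ ≠ 1) :
    Finite (Subgroup.centralizer {M} ⧸ Subgroup.zpowers
      (⟨M, Subgroup.mem_centralizer_singleton_iff.mpr rfl⟩ : Subgroup.centralizer {M})) := by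
  obtain ⟨P, hP⟩ := exists_semiconjBy_diagonal hD fun k ↦ isRoot_charpoly_map_intCast (hroot k)
  let χ := eigenvalueHom hD hP (commute_centralizerToComplexMatrix M)
  have hχM : χ ⟨M, Subgroup.mem_centralizer_singleton_iff.mpr rfl⟩ = D :=
    eigenvalueHom_eq_of_apply_eq hD hP _ rfl
  have hχconj (N) {k l : n} (hkl : D l = conj (D k)) : ‖χ N l‖ = ‖χ N k‖ := by
    rw [← RCLike.norm_conj (χ N k), eigenvalueHom_eq_map_of_eq_map hD hP _ N
      (starRingEnd ℂ).injective (map_conj_map_intCast _) (map_conj_map_intCast _) hkl]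
  have hnorm (N k) : ‖χ N k‖ = ‖χ N i‖ ∨ ‖χ N k‖ = ‖χ N j‖ := by
    rcases hij k with h | h | h | h
    · exact .inl (by rw [hD h])
    · exact .inl (hχconj N h)
    · exact .inr (by rw [hD h])
    · exact .inr (hχconj N h)
  have hprod (N) : ∏ k, ‖χ N k‖ = 1 := by
    rw [← norm_prod, prod_eigenvalueHom, centralizerToComplexMatrix_apply, norm_det_map_intCast]
  refine finite_quotient_zpowers_of_norm_ne_one ((Pi.evalMonoidHom _ i).comp χ)
    (by simpa [hχM] using hi) fun C ↦ ?_
  refine ((finite_setOf_semiconjBy_diagonal P (max C 1)).preimage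
    (Units.val_injective.comp Subtype.val_injective).injOn).subset ?_
  rintro N ⟨hN, hNC⟩
  refine ⟨χ N, fun k ↦ ?_, semiconjBy_diagonal_eigenvalueHom hD hP _ N⟩
  have hone : ‖χ N j‖ ≤ 1 :=
    le_one_of_prod_eq_one (x := fun l ↦ ‖χ N l‖) (hprod N) (hnorm N) hN
  rcases hnorm N k with h | h
  · exact h.trans_le (le_max_of_le_left hNC)
  · exact h.trans_le (le_max_of_le_right hone)

end Centralizer

theorem injective_vecCons_ofReal_conj {α : ℝ} {β : ℂ} (hβ : β ≠ conj β) :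
    Injective ![(α : ℂ), β, conj β] := by
  have hα : (α : ℂ) ≠ β := by
    rintro rfl
    exact hβ (Complex.conj_ofReal α).symm
  have hα' : (α : ℂ) ≠ conj β := by
    rw [← Complex.conj_ofReal]
    exact (starRingEnd ℂ).injective.ne hα
  simp [Injective, Fin.forall_fin_succ, hα, hα', hβ, hα.symm, hα'.symm, hβ.symm]

theorem aeval_vecCons_ofReal_conj_eq_zero {p : Polynomial ℤ} {α : ℝ} {β : ℂ}
    (hα : Polynomial.aeval α p = 0) (hβ : Polynomial.aeval β p = 0) (k : Fin 3) :
    Polynomial.aeval (![(α : ℂ), β, conj β] k) p = 0 := by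
  have hα' : Polynomial.aeval (α : ℂ) p = 0 := by
    rw [← Complex.coe_algebraMap, Polynomial.aeval_algebraMap_apply, hα, map_zero]
  have hβ' : Polynomial.aeval (conj β) p = 0 := by
    simpa [hβ] using Polynomial.aeval_algHom_apply (starRingEnd ℂ).toIntAlgHom β p
  fin_cases k
  exacts [hα', hβ, hβ']

/-- Let `M ∈ GL₃(ℤ)` have a real eigenvalue `α ≠ ±1` and a nonreal complex eigenvalue
`β`, and let `Γ` be the centralizer of `M` in `GL₃(ℤ)`. Then the cyclic subgroup
generated by `M` has finite index in `Γ`, i.e. the quotient `Γ / M^ℤ` is finite. -/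
theorem centralizer_GL3_quotient_zpowers_finite
    (M : GL (Fin 3) ℤ)
    (α : ℝ) (hα1 : α ≠ 1) (hα2 : α ≠ -1)
    (hαroot : Polynomial.aeval α (Matrix.charpoly (M : Matrix (Fin 3) (Fin 3) ℤ)) = 0)
    (β : ℂ) (hβroot : Polynomial.aeval β (Matrix.charpoly (M : Matrix (Fin 3) (Fin 3) ℤ)) = 0)
    (hβ : β ≠ (starRingEnd ℂ) β)
    (hM : M ∈ Subgroup.centralizer ({M} : Set (GL (Fin 3) ℤ))) :
    Finite ((Subgroup.centralizer ({M} : Set (GL (Fin 3) ℤ))) ⧸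
      Subgroup.zpowers (⟨M, hM⟩ : Subgroup.centralizer ({M} : Set (GL (Fin 3) ℤ)))) := by
  exact centralizer_GL3_quotient_zpowers_finite_general M (i := 0) (j := 1)
    (injective_vecCons_ofReal_conj hβ) (aeval_vecCons_ofReal_conj_eq_zero hαroot hβroot)
    (by simp [Fin.forall_fin_succ]) (by simpa [abs_eq] using ⟨hα1, hα2⟩)
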